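/- arXiv:1907.03114 — 3 statements merged into one kernel-verified Lean document; each statement's English description precedes it below -/
import Mathlib

section
/- Let r > 0. There exists a constant C > 0 such that for every Schwartz function f : ℝ³ → ℂ whose Fourier transform satisfies 𝓕f(ξ) = 0 for all ξ with |ξ| > r, one has ∫_{ℝ³} (1+|x|)|f(x)|³ dx ≤ C (‖f‖_{L²}³ + ‖f‖_{L²}² ‖|x|∇f‖_{L²}). -/
open MeasureTheory FourierTransform
open scoped ENNReal NNReal SchwartzMap

noncomputable section

local notation "E³" => EuclideanSpace ℝ (Fin 3)

lemma L2_fin (f : 𝓢(E³, ℂ)) : eLpNorm (⇑f) 2 (volume : Measure E³) ≠ ⊤ :=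
  (SchwartzMap.memLp f 2 (volume : Measure E³)).eLpNorm_ne_top

lemma bernstein_low (r : ℝ) : ∃ A : ℝ≥0, ∀ f : 𝓢(E³, ℂ),
      (∀ ξ : E³, r < ‖ξ‖ → 𝓕 (⇑f) ξ = 0) → ∀ x, ‖f x‖ₑ ≤ A * eLpNorm (⇑f) 2 (volume : Measure E³) := by
  refine ⟨((volume (Metric.closedBall (0:E³) r)) ^ (1/2 : ℝ)).toNNReal, fun f hf x => ?_⟩
  have hA : (((volume (Metric.closedBall (0:E³) r)) ^ (1/2 : ℝ)).toNNReal : ℝ≥0∞) =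
      (volume (Metric.closedBall (0:E³) r)) ^ (1/2 : ℝ) := by
    apply ENNReal.coe_toNNReal
    apply ENNReal.rpow_ne_top_of_nonneg (by norm_num)
    exact measure_closedBall_lt_top.ne
  rw [hA]
  set g : 𝓢(E³, ℂ) := 𝓕 f with hg
  have h1 : f x = 𝓕⁻ (⇑g) x := by
    rw [← SchwartzMap.fourierInv_coe, hg, FourierTransform.fourierInv_fourier_eq]
  have h2 : ‖f x‖ₑ ≤ ∫⁻ ξ, ‖g ξ‖ₑ := by
    rw [h1, Real.fourierInv_eq]
    refine (enorm_integral_le_lintegral_enorm _).trans (le_of_eq ?_)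
    congr 1; ext ξ
    rw [← ofReal_norm, ← ofReal_norm, Circle.norm_smul]
  have h3 : ∫⁻ ξ, ‖g ξ‖ₑ = ∫⁻ ξ, ((Metric.closedBall (0:E³) r).indicator (1 : E³ → ℝ≥0∞) * fun ξ => ‖g ξ‖ₑ) ξ := by
    congr 1; ext ξ
    by_cases h : ξ ∈ Metric.closedBall (0:E³) r
    · simp [h]
    · simp only [Pi.mul_apply, h, not_false_eq_true, Set.indicator_of_notMem, zero_mul]
      have : g ξ = 0 := by
        rw [hg, SchwartzMap.fourier_coe]; apply hf; simpa using h
      simp [this]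
  have h4 := ENNReal.lintegral_mul_le_Lp_mul_Lq (volume : Measure E³) Real.HolderConjugate.two_two
    (f := (Metric.closedBall (0:E³) r).indicator 1) (g := fun ξ => ‖g ξ‖ₑ)
    (by apply AEMeasurable.indicator (by fun_prop) measurableSet_closedBall) (by fun_prop)
  have h5 : ∫⁻ ξ, (Metric.closedBall (0:E³) r).indicator (1 : E³ → ℝ≥0∞) ξ ^ (2:ℝ) =
      volume (Metric.closedBall (0:E³) r) := by
    rw [← lintegral_indicator_one measurableSet_closedBall]
    congr 1; ext ξ
    by_cases h : ξ ∈ Metric.closedBall (0:E³) r <;> simp [h]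
  have h6 : (∫⁻ ξ, ‖g ξ‖ₑ ^ (2:ℝ)) ^ (1/2:ℝ) = eLpNorm (⇑f) 2 (volume : Measure E³) := by
    have : eLpNorm (⇑g) 2 (volume : Measure E³) = eLpNorm (⇑f) 2 (volume : Measure E³) := by
      have := SchwartzMap.norm_fourier_toL2_eq f
      rw [SchwartzMap.norm_toLp, SchwartzMap.norm_toLp] at this
      exact (ENNReal.toReal_eq_toReal_iff' (L2_fin g) (L2_fin f)).1 this
    rw [← this, eLpNorm_eq_lintegral_rpow_enorm_toReal (by norm_num) (by norm_num)]
    simp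
  rw [h5, h6] at h4
  exact h2.trans (h3.trans_le h4)

lemma cutoff_bound : ∃ (χ : E³ → ℝ) (K : ℝ), 0 ≤ K ∧ ContDiff ℝ 1 χ ∧ HasCompactSupport χ ∧
    (∀ x, |χ x| ≤ 1) ∧ (∀ x, ‖x‖ ≤ 1 → χ x = 1) ∧ ∀ x, ‖fderiv ℝ χ x‖ ≤ K := by
  let χ : ContDiffBump (0:E³) := ⟨1, 2, by norm_num, by norm_num⟩
  have hc : ContDiff ℝ 1 χ := χ.contDiff
  obtain ⟨K, hK⟩ := (hc.continuous_fderiv (by norm_num)).bounded_above_of_compact_support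
    (χ.hasCompactSupport.fderiv ℝ)
  refine ⟨χ, K, (norm_nonneg _).trans (hK 0), hc, χ.hasCompactSupport, ?_, ?_, hK⟩
  · intro x; rw [abs_of_nonneg χ.nonneg]; exact χ.le_one
  · intro x hx; apply χ.one_of_mem_closedBall; simpa using hx

lemma weight_fderiv (ε : ℝ) (hε : 0 < ε) (x : E³) :
    ‖fderiv ℝ (fun x : E³ => √(ε^2 + ‖x‖^2)) x‖ ≤ 1 := by
  have h0 : 0 < ε^2 + ‖x‖^2 := by positivity
  have h1 : HasFDerivAt (fun x : E³ => ε^2 + ‖x‖^2) (2 • (innerSL ℝ x)) x := by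
    simpa using (hasStrictFDerivAt_norm_sq x).hasFDerivAt.const_add (ε^2)
  rw [(h1.sqrt h0.ne').fderiv, norm_smul, ← Nat.cast_smul_eq_nsmul ℝ, norm_smul, innerSL_apply_norm]
  have : ‖x‖ ≤ √(ε^2 + ‖x‖^2) := Real.le_sqrt_of_sq_le (by nlinarith)
  have h3 : 0 < √(ε^2 + ‖x‖^2) := Real.sqrt_pos.2 h0
  simp only [norm_div, norm_mul, Real.norm_eq_abs, abs_of_pos h3]
  norm_num
  rw [← mul_assoc]
  field_simp
  simpa

lemma normsq_fderiv (f : 𝓢(E³, ℂ)) (x : E³) :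
    ‖fderiv ℝ (fun x : E³ => ‖f x‖^2) x‖ ≤ 2 * ‖f x‖ * ‖fderiv ℝ f x‖ := by
  have h1 := (f.differentiableAt (x := x)).hasFDerivAt.norm_sq
  rw [h1.fderiv, ← Nat.cast_smul_eq_nsmul ℝ, norm_smul]
  have := ContinuousLinearMap.opNorm_comp_le (innerSL ℝ (f x)) (fderiv ℝ f x)
  rw [innerSL_apply_norm] at this
  norm_num
  linarith

lemma scaled_fderiv (χ : E³ → ℝ) (K : ℝ) (hK : ∀ x, ‖fderiv ℝ χ x‖ ≤ K)
   (ε : ℝ) (hε : 0 < ε) (x : E³) : ‖fderiv ℝ (fun x => χ (ε • x)) x‖ ≤ ε * K := by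
  rw [fderiv_comp_smul, norm_smul, Real.norm_of_nonneg hε.le]
  gcongr
  exact hK _

lemma u_fderiv (χ : E³ → ℝ) (K : ℝ) (hK0 : 0 ≤ K) (hχ : ContDiff ℝ 1 χ) (hχ1 : ∀ x, |χ x| ≤ 1)
   (hK : ∀ x, ‖fderiv ℝ χ x‖ ≤ K) (f : 𝓢(E³, ℂ)) 
   (ε : ℝ) (hε : 0 < ε) (hε1 : ε ≤ 1) (x : E³) :
   ContDiff ℝ 1 (fun x => χ (ε • x) * √(ε^2 + ‖x‖^2) * ‖f x‖^2) ∧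
   ‖fderiv ℝ (fun x => χ (ε • x) * √(ε^2 + ‖x‖^2) * ‖f x‖^2) x‖ ≤
     (‖f x‖ * ‖f x‖ + 2 * (‖f x‖ * (‖x‖ * ‖fderiv ℝ f x‖))) + 
      ε * (K * ((1 + ‖x‖ ^ 1) * ‖f x‖ * ‖f x‖) + 2 * (‖f x‖ * ‖fderiv ℝ f x‖)) := by
  have c1 : ContDiff ℝ 1 (fun x : E³ => χ (ε • x)) := hχ.comp (contDiff_const_smul ε)
  have c2 : ContDiff ℝ 1 (fun x : E³ => √(ε^2 + ‖x‖^2)) := by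
    apply ContDiff.sqrt
    · exact contDiff_const.add (contDiff_norm_sq ℝ)
    · intro x; positivity
  have c3 : ContDiff ℝ 1 (fun x : E³ => ‖f x‖^2) := (f.smooth 1).norm_sq ℝ
  refine ⟨(c1.mul c2).mul c3, ?_⟩
  have d1 := c1.differentiable (by norm_num) x
  have d2 := c2.differentiable (by norm_num) x
  have d3 := c3.differentiable (by norm_num) x
  have w1 : √(ε^2 + ‖x‖^2) ≤ ε + ‖x‖ := by
    apply Real.sqrt_le_iff.2 ⟨by positivity, ?_⟩
    nlinarith [norm_nonneg x, mul_nonneg hε.le (norm_nonneg x)]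
  rw [fderiv_fun_mul (d1.fun_mul d2) d3, fderiv_fun_mul d1 d2]
  have b1 := scaled_fderiv χ K hK ε hε x
  have b2 := weight_fderiv ε hε x
  have b3 := normsq_fderiv f x
  have b0 := hχ1 (ε • x)
  set P := fderiv ℝ (fun x : E³ => χ (ε • x)) x
  set Q := fderiv ℝ (fun x : E³ => √(ε^2 + ‖x‖^2)) x
  set R := fderiv ℝ (fun x : E³ => ‖f x‖^2) x
  set w := √(ε^2 + ‖x‖^2)
  have w0 : 0 ≤ w := Real.sqrt_nonneg _
  calc _ ≤ |χ (ε • x)| * w * ‖R‖ + ‖f x‖^2 * (|χ (ε • x)| * ‖Q‖ + w * ‖P‖) := by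
        refine (norm_add_le _ _).trans ?_
        rw [norm_smul, norm_smul, norm_mul, norm_pow, norm_norm, Real.norm_eq_abs, Real.norm_of_nonneg w0]
        gcongr
        refine (norm_add_le _ _).trans ?_
        rw [norm_smul, norm_smul, Real.norm_eq_abs, Real.norm_of_nonneg w0]
    _ ≤ 1 * (ε + ‖x‖) * (2 * ‖f x‖ * ‖fderiv ℝ f x‖) + ‖f x‖^2 * (1 * 1 + (1 + ‖x‖) * (ε * K)) := by
        gcongr
        linarith
    _ = _ := by ring

lemma cs {a b : E³ → ℝ} (ha : Continuous a) (hb : Continuous b) :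
    ∫⁻ x, ‖a x‖ₑ * ‖b x‖ₑ ≤ eLpNorm a 2 volume * eLpNorm b 2 volume := by
  have h4 := ENNReal.lintegral_mul_le_Lp_mul_Lq (volume : Measure E³) Real.HolderConjugate.two_two
    (f := fun x => ‖a x‖ₑ) (g := fun x => ‖b x‖ₑ) (by fun_prop) (by fun_prop)
  rw [eLpNorm_eq_lintegral_rpow_enorm_toReal (by norm_num) (by norm_num), eLpNorm_eq_lintegral_rpow_enorm_toReal (by norm_num) (by norm_num)]
  simpa using h4

lemma err_integrable (f : 𝓢(E³, ℂ)) (K : ℝ) :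
    Integrable (fun x : E³ => K * ((1 + ‖x‖ ^ 1) * ‖f x‖ * ‖f x‖) + 2 * (‖f x‖ * ‖fderiv ℝ f x‖)) := by
  have i1 : Integrable (fun x : E³ => ‖f x‖) := f.integrable.norm
  have i2 : Integrable (fun x : E³ => ‖x‖^1 * ‖f x‖) := f.integrable_pow_mul volume 1
  have cf' : Continuous (fun x => fderiv ℝ f x) := (f.smooth 1).continuous_fderiv (by norm_num)
  obtain ⟨B, _, hB⟩ := f.decay 0 0
  obtain ⟨B', _, hB'⟩ := f.decay 0 1
  simp only [pow_zero, one_mul, norm_iteratedFDeriv_zero, norm_iteratedFDeriv_one] at hB hB'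
  refine Integrable.add (Integrable.const_mul ?_ _) (Integrable.const_mul ?_ _)
  · have : Integrable (fun x : E³ => (1 + ‖x‖ ^ 1) * ‖f x‖) := by
      refine (i1.add i2).congr (Filter.Eventually.of_forall fun x => ?_)
      simp [add_mul]
    refine this.mul_bdd (c := B) (by fun_prop) (Filter.Eventually.of_forall fun x => ?_)
    simpa using hB x
  · refine i1.mul_bdd (c := B') (by fun_prop) (Filter.Eventually.of_forall fun x => ?_)
    simpa using hB' x

open Filter Topology in
lemma weighted_gns : ∃ S : ℝ≥0, ∀ f : 𝓢(E³, ℂ),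
    ∫⁻ x : E³, (‖x‖ₑ * ‖f x‖ₑ ^ 2) ^ (3/2 : ℝ) ≤
      S * ((eLpNorm (⇑f) 2 (volume : Measure E³)) ^ 2 +
            2 * (eLpNorm (⇑f) 2 (volume : Measure E³) *
              eLpNorm (fun x : E³ => ‖x‖ * ‖fderiv ℝ (⇑f) x‖) 2 (volume : Measure E³))) ^ (3/2 : ℝ) := by
  obtain ⟨χ, K, hK0, hχ, hχs, hχ1, hχe, hK⟩ := cutoff_bound
  refine ⟨lintegralPowLePowLIntegralFDerivConst (volume : Measure E³) (3/2), fun f => ?_⟩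
  set S := lintegralPowLePowLIntegralFDerivConst (volume : Measure E³) (3/2)
  set N := eLpNorm (⇑f) 2 (volume : Measure E³) with hN
  set D := eLpNorm (fun x : E³ => ‖x‖ * ‖fderiv ℝ (⇑f) x‖) 2 (volume : Measure E³) with hD
  let G : E³ → ℝ := fun x => K * ((1 + ‖x‖ ^ 1) * ‖f x‖ * ‖f x‖) + 2 * (‖f x‖ * ‖fderiv ℝ f x‖)
  have hG0 : ∀ x, 0 ≤ G x := fun x => by positivity
  have hGi : Integrable G := err_integrable f K
  set L := ∫⁻ x, ENNReal.ofReal (G x) with hL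
  have hLt : L ≠ ⊤ := by
    have := hGi.lintegral_lt_top
    exact this.ne
  have cf : Continuous (fun x => f x) := f.continuous
  have cf' : Continuous (fun x => fderiv ℝ f x) := (f.smooth 1).continuous_fderiv (by norm_num)
  have cnf : Continuous (fun x => ‖f x‖) := cf.norm
  have cxf : Continuous (fun x : E³ => ‖x‖ * ‖fderiv ℝ f x‖) := continuous_norm.mul cf'.norm
  let ε : ℕ → ℝ := fun n => 1 / ((n:ℝ) + 1)
  have hε0 : ∀ n, 0 < ε n := fun n => by positivity
  have hε1 : ∀ n, ε n ≤ 1 := fun n => by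
    simp only [ε]; rw [div_le_one (by positivity)]; linarith [(Nat.cast_nonneg n : (0:ℝ) ≤ n)]
  have hεt : Tendsto ε atTop (𝓝 0) := tendsto_one_div_add_atTop_nhds_zero_nat
  let u : ℕ → E³ → ℝ := fun n x => χ (ε n • x) * √((ε n)^2 + ‖x‖^2) * ‖f x‖^2
  have hu1 : ∀ n, ContDiff ℝ 1 (u n) := fun n =>
    (u_fderiv χ K hK0 hχ hχ1 hK f (ε n) (hε0 n) (hε1 n) 0).1
  have hus : ∀ n, HasCompactSupport (u n) := fun n =>
    ((hχs.comp_smul (hε0 n).ne').mul_right).mul_right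
  have hnf : eLpNorm (fun x => ‖f x‖) 2 (volume : Measure E³) = N := eLpNorm_norm _
  have hgrad : ∀ n, ∫⁻ x, ‖fderiv ℝ (u n) x‖ₑ ≤ N ^ 2 + 2 * (N * D) + ENNReal.ofReal (ε n) * L := by
    intro n
    calc ∫⁻ x, ‖fderiv ℝ (u n) x‖ₑ ≤ ∫⁻ x, ((‖‖f x‖‖ₑ * ‖‖f x‖‖ₑ +
          2 * (‖‖f x‖‖ₑ * ‖‖x‖ * ‖fderiv ℝ f x‖‖ₑ)) + ENNReal.ofReal (ε n) * ENNReal.ofReal (G x)) := by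
          apply lintegral_mono
          intro x
          have := (u_fderiv χ K hK0 hχ hχ1 hK f (ε n) (hε0 n) (hε1 n) x).2
          beta_reduce
          rw [← ofReal_norm (fderiv ℝ (u n) x)]
          refine (ENNReal.ofReal_le_ofReal this).trans (le_of_eq ?_)
          have e1 : ‖‖f x‖‖ₑ = ENNReal.ofReal ‖f x‖ := by rw [← ofReal_norm, norm_norm]
          have e2 : ‖‖x‖ * ‖fderiv ℝ f x‖‖ₑ = ENNReal.ofReal (‖x‖ * ‖fderiv ℝ f x‖) := by
            rw [← ofReal_norm, Real.norm_of_nonneg (by positivity)]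
          rw [e1, e2, ENNReal.ofReal_add (by positivity) (mul_nonneg (hε0 n).le (hG0 x)),
            ENNReal.ofReal_add (by positivity) (by positivity),
            ENNReal.ofReal_mul (by positivity), ENNReal.ofReal_mul (by norm_num),
            ENNReal.ofReal_mul (by positivity), ENNReal.ofReal_mul (hε0 n).le]
          simp [G]
      _ = (∫⁻ x, ‖‖f x‖‖ₑ * ‖‖f x‖‖ₑ) + 2 * (∫⁻ x, ‖‖f x‖‖ₑ * ‖‖x‖ * ‖fderiv ℝ f x‖‖ₑ)
          + ENNReal.ofReal (ε n) * L := by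
          have m1 : Measurable (fun x => ‖‖f x‖‖ₑ * ‖‖f x‖‖ₑ) := by fun_prop
          have m2 : Measurable (fun x => ‖‖f x‖‖ₑ * ‖‖x‖ * ‖fderiv ℝ f x‖‖ₑ) :=
            (cnf.enorm.measurable).mul (cxf.enorm.measurable)
          have m3 : Measurable (fun x => ‖‖f x‖‖ₑ * ‖‖f x‖‖ₑ + 2 * (‖‖f x‖‖ₑ * ‖‖x‖ * ‖fderiv ℝ f x‖‖ₑ)) :=
            m1.add (m2.const_mul 2)
          rw [lintegral_add_left m3, lintegral_add_left m1,
            lintegral_const_mul _ m2, lintegral_const_mul' _ _ ENNReal.ofReal_ne_top]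
      _ ≤ _ := by
          have c1 := cs cnf cnf
          have c2 := cs cnf cxf
          rw [hnf] at c1 c2
          rw [pow_two]
          gcongr
  have hp : Real.HolderConjugate (Module.finrank ℝ E³ : ℝ) (3/2) := by
    rw [Real.holderConjugate_iff]; norm_num
  have hgns : ∀ n, ∫⁻ x, ‖u n x‖ₑ ^ (3/2:ℝ) ≤
      S * (N ^ 2 + 2 * (N * D) + ENNReal.ofReal (ε n) * L) ^ (3/2:ℝ) := fun n => by
    refine (lintegral_pow_le_pow_lintegral_fderiv volume (hu1 n) (hus n) hp).trans ?_
    gcongr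
    exact hgrad n
  have hlim : Tendsto (fun n => (S:ℝ≥0∞) * (N ^ 2 + 2 * (N * D) + ENNReal.ofReal (ε n) * L) ^ (3/2:ℝ))
      atTop (𝓝 (S * (N ^ 2 + 2 * (N * D)) ^ (3/2:ℝ))) := by
    refine ENNReal.Tendsto.const_mul ?_ (Or.inr ENNReal.coe_ne_top)
    refine (ENNReal.continuous_rpow_const.tendsto _).comp ?_
    have t1 : Tendsto (fun n => ENNReal.ofReal (ε n) * L) atTop (𝓝 0) := by
      have := ENNReal.Tendsto.mul_const (ENNReal.tendsto_ofReal hεt) (b := L) (Or.inr hLt)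
      simpa using this
    simpa using t1.const_add (N ^ 2 + 2 * (N * D))
  have hpt : ∀ x, Tendsto (fun n => ‖u n x‖ₑ ^ (3/2:ℝ)) atTop (𝓝 ((‖x‖ₑ * ‖f x‖ₑ ^ 2) ^ (3/2 : ℝ))) := by
    intro x
    refine (ENNReal.continuous_rpow_const.tendsto _).comp ?_
    have e : ‖x‖ₑ * ‖f x‖ₑ ^ 2 = ‖1 * √(0^2 + ‖x‖^2) * ‖f x‖^2‖ₑ := by
      simp [enorm_mul]
    rw [e]
    refine (continuous_enorm.tendsto _).comp ?_
    refine Tendsto.mul (Tendsto.mul ?_ ?_) tendsto_const_nhds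
    · have t : Tendsto (fun n => ‖ε n • x‖) atTop (𝓝 0) := by
        have := (hεt.smul_const x).norm
        simpa using this
      refine tendsto_const_nhds.congr' ?_
      filter_upwards [t.eventually_lt_const one_pos] with n hn
      exact (hχe _ hn.le).symm
    · exact (Real.continuous_sqrt.tendsto _).comp ((hεt.pow 2).add_const _)
  calc ∫⁻ x : E³, (‖x‖ₑ * ‖f x‖ₑ ^ 2) ^ (3/2 : ℝ)
      = ∫⁻ x, liminf (fun n => ‖u n x‖ₑ ^ (3/2:ℝ)) atTop := by
        congr 1; ext x; exact (hpt x).liminf_eq.symm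
    _ ≤ liminf (fun n => ∫⁻ x, ‖u n x‖ₑ ^ (3/2:ℝ)) atTop :=
        lintegral_liminf_le fun n => (hu1 n).continuous.enorm.measurable.pow_const _
    _ ≤ liminf (fun n => (S:ℝ≥0∞) * (N ^ 2 + 2 * (N * D) + ENNReal.ofReal (ε n) * L) ^ (3/2:ℝ)) atTop :=
        liminf_le_liminf (Eventually.of_forall hgns)
    _ = _ := hlim.liminf_eq

/-- Weighted cubic estimate for band-limited Schwartz functions:
`∫ (1+|x|)|f|³ ≤ C (‖f‖₂³ + ‖f‖₂² ‖|x|∇f‖₂)`. -/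
theorem weighted_cubic_estimate_low (r : ℝ) (hr : 0 < r) :
    ∃ C : ℝ, 0 < C ∧ ∀ f : 𝓢(E³, ℂ),
      (∀ ξ : E³, r < ‖ξ‖ → 𝓕 (⇑f) ξ = 0) →
      ∫⁻ x : E³, ENNReal.ofReal ((1 + ‖x‖) * ‖f x‖ ^ 3) ≤
        ENNReal.ofReal C *
          ((eLpNorm (⇑f) 2 (volume : Measure E³)) ^ 3 +
            (eLpNorm (⇑f) 2 (volume : Measure E³)) ^ 2 *
              eLpNorm (fun x : E³ => ‖x‖ * ‖fderiv ℝ (⇑f) x‖) 2 (volume : Measure E³)) := by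
  obtain ⟨A, hA⟩ := bernstein_low r
  obtain ⟨S, hS⟩ := weighted_gns
  let B : ℝ≥0 := S ^ (2/3:ℝ) * A ^ (1/3:ℝ)
  refine ⟨((A + 2 * B + 1 : ℝ≥0) : ℝ), by positivity, fun f hf => ?_⟩
  rw [ENNReal.ofReal_coe_nnreal]
  have hA := hA f hf
  have hS := hS f
  set N := eLpNorm (⇑f) 2 (volume : Measure E³) with hN
  set D := eLpNorm (fun x : E³ => ‖x‖ * ‖fderiv ℝ (⇑f) x‖) 2 (volume : Measure E³) with hD
  have cf : Continuous (fun x => f x) := f.continuous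
  have cnf : Continuous (fun x => ‖f x‖) := cf.norm
  have hnf : eLpNorm (fun x => ‖f x‖) 2 (volume : Measure E³) = N := eLpNorm_norm _
  have h3 : ∫⁻ x, ‖f x‖ₑ ^ 3 ≤ A * N ^ 3 := by
    have c1 := cs cnf cnf
    rw [hnf] at c1
    calc ∫⁻ x, ‖f x‖ₑ ^ 3 ≤ ∫⁻ x, (A * N) * (‖‖f x‖‖ₑ * ‖‖f x‖‖ₑ) := by
          apply lintegral_mono
          intro x
          simp only [enorm_norm]
          calc ‖f x‖ₑ ^ 3 = ‖f x‖ₑ * (‖f x‖ₑ * ‖f x‖ₑ) := by ring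
            _ ≤ _ := by gcongr; exact hA x
      _ = (A * N) * ∫⁻ x, (‖‖f x‖‖ₑ * ‖‖f x‖‖ₑ) := lintegral_const_mul _ (by fun_prop)
      _ ≤ (A * N) * (N * N) := by gcongr
      _ = _ := by ring
  have hsplit : ∫⁻ x : E³, ENNReal.ofReal ((1 + ‖x‖) * ‖f x‖ ^ 3) =
      (∫⁻ x, ‖f x‖ₑ ^ 3) + ∫⁻ x, ((fun x : E³ => ‖x‖ₑ * ‖f x‖ₑ ^ 2) * (fun x => ‖f x‖ₑ)) x := by
    rw [← lintegral_add_left (by fun_prop)]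
    congr 1; ext x
    rw [ENNReal.ofReal_mul (by positivity), ENNReal.ofReal_add (by positivity) (by positivity),
      ENNReal.ofReal_pow (by positivity), ofReal_norm, ofReal_norm]
    simp only [ENNReal.ofReal_one, Pi.mul_apply]
    ring
  have hp : Real.HolderConjugate (3/2) 3 := by
    rw [Real.holderConjugate_iff]; norm_num
  have hh := ENNReal.lintegral_mul_le_Lp_mul_Lq (volume : Measure E³) hp
    (f := fun x : E³ => ‖x‖ₑ * ‖f x‖ₑ ^ 2) (g := fun x => ‖f x‖ₑ)
    (by fun_prop) (by fun_prop)
  have h3' : ∫⁻ x, ‖f x‖ₑ ^ (3:ℝ) ≤ A * N ^ 3 := by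
    refine le_trans (le_of_eq ?_) h3
    congr 1; ext x; exact_mod_cast ENNReal.rpow_natCast _ 3
  have hh2 : ∫⁻ x, ((fun x : E³ => ‖x‖ₑ * ‖f x‖ₑ ^ 2) * (fun x => ‖f x‖ₑ)) x ≤
      B * (N ^ 2 + 2 * (N * D)) * N := by
    refine hh.trans ?_
    calc _ ≤ (S * (N ^ 2 + 2 * (N * D)) ^ (3/2 : ℝ)) ^ (1 / (3/2) : ℝ) * (A * N ^ 3) ^ (1/3:ℝ) := by
          gcongr
      _ = _ := by
          rw [ENNReal.mul_rpow_of_nonneg _ _ (by norm_num), ENNReal.mul_rpow_of_nonneg _ _ (by norm_num),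
            ← ENNReal.rpow_mul, ← ENNReal.rpow_natCast N 3, ← ENNReal.rpow_mul]
          have e1 : (3/2 * (1 / (3/2)) : ℝ) = 1 := by norm_num
          have e2 : (((3:ℕ):ℝ) * (1 / 3) : ℝ) = 1 := by norm_num
          have e3 : (1 / (3/2) : ℝ) = 2/3 := by norm_num
          rw [e1, e2, e3, ENNReal.rpow_one, ENNReal.rpow_one]
          simp only [B]
          rw [ENNReal.coe_mul, ENNReal.coe_rpow_of_nonneg _ (by norm_num),
            ENNReal.coe_rpow_of_nonneg _ (by norm_num)]
          ring
  rw [hsplit]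
  calc _ ≤ A * N ^ 3 + B * (N ^ 2 + 2 * (N * D)) * N := add_le_add h3 hh2
    _ ≤ A * N ^ 3 + B * (N ^ 2 + 2 * (N * D)) * N + (B * N^3 + A * (N^2 * D) + (N^3 + N^2 * D)) :=
        le_self_add
    _ = _ := by push_cast; ring
end
end

section
/- There exists a constant C > 0 such that for every twice continuously differentiable, compactly supported function u : ℝ³ → ℂ, writing M = ‖u‖_{L²} + ‖∇u‖_{L²} + ‖∇²u‖_{L²}, the function N(x) = |u(x)|²u(x) satisfies ‖(1+|x|)N‖_{L²} + ‖(1+|x|)∇N‖_{L²} ≤ C (M³ + M²(‖|x|u‖_{L²} + ‖|x|∇u‖_{L²})). -/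
open MeasureTheory
open scoped ENNReal NNReal

noncomputable section

local notation "E³" => EuclideanSpace ℝ (Fin 3)

/-- Hölder and scaling on the unit ball. -/
lemma ball_avg_le {F : Type*} [NormedAddCommGroup F] (g : E³ → F) (hg : Continuous g)
    (x : E³) (t : ℝ) (ht : 0 < t) :
    ∫⁻ y in Metric.ball (0 : E³) 1, ‖g (x + t • y)‖ₑ ≤
      ENNReal.ofReal (t ^ (-(1/2) : ℝ)) *
        (eLpNorm g 6 volume * volume (Metric.ball (0 : E³) 1) ^ (5/6 : ℝ)) := by
  have hc : Continuous (fun y : E³ => g (x + t • y)) := by fun_prop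
  have hc2 : Continuous (fun y : E³ => g (x + y)) := by fun_prop
  have h := eLpNorm_le_eLpNorm_mul_rpow_measure_univ
    (μ := volume.restrict (Metric.ball (0 : E³) 1)) (p := 1) (q := 6) (by norm_num)
    hc.aestronglyMeasurable
  rw [eLpNorm_one_eq_lintegral_enorm, Measure.restrict_apply_univ] at h
  have h3 : (1 / (1 : ℝ≥0∞).toReal - 1 / (6 : ℝ≥0∞).toReal) = 5 / 6 := by norm_num
  rw [h3] at h
  refine h.trans ?_
  rw [← mul_assoc]
  gcongr
  refine (eLpNorm_mono_measure _ Measure.restrict_le_self).trans ?_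
  have h4 := eLpNorm_map_measure (p := 6) (μ := (volume : Measure E³))
    (f := fun y : E³ => t • y) (g := fun y => g (x + y)) hc2.aestronglyMeasurable
    (by fun_prop)
  have h5 : eLpNorm (fun y : E³ => g (x + y)) 6 volume = eLpNorm g 6 volume :=
    eLpNorm_comp_measurePreserving hg.aestronglyMeasurable (measurePreserving_add_left volume x)
  have hpos : 0 < |(t ^ 3)⁻¹| := by positivity
  rw [Measure.map_addHaar_smul _ ht.ne', finrank_euclideanSpace_fin,
    eLpNorm_smul_measure_of_ne_zero (ENNReal.ofReal_pos.2 hpos).ne', h5,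
    ENNReal.ofReal_rpow_of_pos hpos] at h4
  have h6 : |(t ^ 3)⁻¹| ^ (1 / (6 : ℝ≥0∞)).toReal = t ^ (-(1/2) : ℝ) := by
    rw [abs_of_pos (by positivity), ← Real.rpow_natCast, ← Real.rpow_neg ht.le,
      ← Real.rpow_mul ht.le]
    norm_num
  rw [h6, smul_eq_mul] at h4
  exact h4.symm.le

lemma power_lintegral_finite :
    ∫⁻ t in Set.Icc (0 : ℝ) 1, ENNReal.ofReal (t ^ (-(1/2) : ℝ)) ≠ ∞ := by
  have h := intervalIntegral.intervalIntegrable_rpow' (a := 0) (b := 1)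
    (r := -(1/2)) (by norm_num)
  rw [intervalIntegrable_iff_integrableOn_Icc_of_le (by norm_num)] at h
  exact h.lintegral_lt_top.ne

lemma sobolev6_gen {G H : Type*} [NormedAddCommGroup G] [NormedSpace ℝ G]
    [FiniteDimensional ℝ G] [NormedAddCommGroup H] (v : E³ → G) (w : E³ → H)
    (hv : ContDiff ℝ 1 v) (hc : HasCompactSupport v)
    (hvw : ∀ x, ‖fderiv ℝ v x‖ = ‖w x‖) :
    eLpNorm v 6 (volume : Measure E³) ≤
      (SNormLESNormFDerivOfEqConst G (volume : Measure E³) 2 : ℝ≥0) *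
        eLpNorm w 2 (volume : Measure E³) := by
  have hp' : (((6 : ℝ≥0) : ℝ))⁻¹ =
      (((2 : ℝ≥0) : ℝ))⁻¹ - (Module.finrank ℝ E³ : ℝ)⁻¹ := by
    rw [finrank_euclideanSpace_fin]; norm_num
  have h := eLpNorm_le_eLpNorm_fderiv_of_eq (volume : Measure E³) hv hc
    (p := 2) (p' := 6) (by norm_num) (by simp) hp'
  have e6 : ((6 : ℝ≥0) : ℝ≥0∞) = 6 := rfl
  have e2 : ((2 : ℝ≥0) : ℝ≥0∞) = 2 := rfl
  rw [e6, e2] at h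
  rw [← eLpNorm_congr_norm_ae (Filter.Eventually.of_forall hvw)]
  exact h

lemma sobolev6 (u : E³ → ℂ) (hu : ContDiff ℝ 2 u) (hc : HasCompactSupport u) :
    eLpNorm (fderiv ℝ u) 6 (volume : Measure E³) ≤
      (SNormLESNormFDerivOfEqConst (E³ →L[ℝ] ℂ) (volume : Measure E³) 2 : ℝ≥0) *
        eLpNorm (iteratedFDeriv ℝ 2 u) 2 (volume : Measure E³) := by
  have hd1 : ContDiff ℝ 1 (fderiv ℝ u) := hu.fderiv_right (by norm_num)
  refine sobolev6_gen (fderiv ℝ u) (iteratedFDeriv ℝ 2 u) hd1 (hc.fderiv ℝ) fun x => ?_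
  rw [← norm_iteratedFDeriv_fderiv, norm_iteratedFDeriv_one]

lemma ptwise (u : E³ → ℂ) (hu : ContDiff ℝ 2 u) (x y : E³) (hy : ‖y‖ ≤ 1) :
    ‖u x‖ₑ ≤ ‖u (x + y)‖ₑ + ∫⁻ t in Set.Icc (0 : ℝ) 1, ‖fderiv ℝ u (x + t • y)‖ₑ := by
  have hd : ∀ z, DifferentiableAt ℝ u z := fun z => (hu.differentiable (by norm_num)) z
  have h := enorm_sub_le_lintegral_deriv_of_contDiffOn_Icc (f := fun t : ℝ => u (x + t • y))
    (a := 0) (b := 1) (ContDiff.contDiffOn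
      ((hu.of_le (by norm_num)).comp (by fun_prop))) (by norm_num)
  simp only [one_smul, zero_smul, add_zero] at h
  calc ‖u x‖ₑ = ‖u (x + y) - (u (x + y) - u x)‖ₑ := by congr 1; ring
    _ ≤ ‖u (x + y)‖ₑ + ‖u (x + y) - u x‖ₑ := enorm_sub_le
    _ ≤ _ := by
      gcongr
      refine h.trans (lintegral_mono fun t => ?_)
      have h1 : HasDerivAt (fun t : ℝ => x + t • y) y t := by
        simpa using ((hasDerivAt_id t).smul_const y).const_add x
      have h2 := (hd (x + t • y)).hasFDerivAt.comp_hasDerivAt t h1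
      have h3 : deriv (fun t : ℝ => u (x + t • y)) t = fderiv ℝ u (x + t • y) y := h2.deriv
      rw [h3]
      simp only [enorm_le_iff_norm_le]
      exact ((fderiv ℝ u (x + t • y)).le_opNorm y).trans
        (mul_le_of_le_one_right (norm_nonneg _) hy)

lemma agmon : ∃ A : ℝ≥0, ∀ u : E³ → ℂ, ContDiff ℝ 2 u → HasCompactSupport u → ∀ x,
    ‖u x‖ₑ ≤ A * (eLpNorm u 2 (volume : Measure E³) +
      eLpNorm (iteratedFDeriv ℝ 2 u) 2 (volume : Measure E³)) := by
  set V := volume (Metric.ball (0 : E³) 1) with hV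
  have hV0 : V ≠ 0 := (Metric.measure_ball_pos _ _ one_pos).ne'
  have hVt : V ≠ ∞ := measure_ball_lt_top.ne
  set I := ∫⁻ t in Set.Icc (0 : ℝ) 1, ENNReal.ofReal (t ^ (-(1/2) : ℝ)) with hI
  have hIt : I ≠ ∞ := power_lintegral_finite
  set S : ℝ≥0 := SNormLESNormFDerivOfEqConst (E³ →L[ℝ] ℂ) (volume : Measure E³) 2 with hS
  set A : ℝ≥0∞ := V⁻¹ * (V ^ (1/2 : ℝ) + I * (S * V ^ (5/6 : ℝ))) with hA
  have hAt : A ≠ ∞ := by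
    refine ENNReal.mul_ne_top (ENNReal.inv_ne_top.2 hV0) (ENNReal.add_ne_top.2 ⟨?_, ?_⟩)
    · exact ENNReal.rpow_ne_top_of_nonneg (by norm_num) hVt
    · exact ENNReal.mul_ne_top hIt (ENNReal.mul_ne_top ENNReal.coe_ne_top
        (ENNReal.rpow_ne_top_of_nonneg (by norm_num) hVt))
  refine ⟨A.toNNReal, fun u hu hc x => ?_⟩
  rw [ENNReal.coe_toNNReal hAt]
  have hdc : Continuous (fderiv ℝ u) := hu.continuous_fderiv (by norm_num)
  have hd1 : ContDiff ℝ 1 (fderiv ℝ u) := hu.fderiv_right (by norm_num)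
  have hsob : eLpNorm (fderiv ℝ u) 6 (volume : Measure E³) ≤
      S * eLpNorm (iteratedFDeriv ℝ 2 u) 2 (volume : Measure E³) := by
    exact sobolev6 u hu hc
  have h1 : ∫⁻ y in Metric.ball (0 : E³) 1, ‖u (x + y)‖ₑ ≤
      eLpNorm u 2 (volume : Measure E³) * V ^ (1/2 : ℝ) := by
    have hcu : Continuous (fun y : E³ => u (x + y)) := hu.continuous.comp (by fun_prop)
    have h := eLpNorm_le_eLpNorm_mul_rpow_measure_univ
      (μ := volume.restrict (Metric.ball (0 : E³) 1)) (p := 1) (q := 2) (by norm_num)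
      hcu.aestronglyMeasurable
    rw [eLpNorm_one_eq_lintegral_enorm, Measure.restrict_apply_univ] at h
    refine h.trans ?_
    have h3 : (1 / (1 : ℝ≥0∞).toReal - 1 / (2 : ℝ≥0∞).toReal) = 1 / 2 := by norm_num
    rw [h3]
    gcongr
    refine (eLpNorm_mono_measure _ Measure.restrict_le_self).trans ?_
    exact (eLpNorm_comp_measurePreserving hu.continuous.aestronglyMeasurable
      (measurePreserving_add_left volume x)).le
  have h2 : ∫⁻ y in Metric.ball (0 : E³) 1, ∫⁻ t in Set.Icc (0 : ℝ) 1,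
      ‖fderiv ℝ u (x + t • y)‖ₑ ≤
      I * (eLpNorm (fderiv ℝ u) 6 (volume : Measure E³) * V ^ (5/6 : ℝ)) := by
    rw [lintegral_lintegral_swap]
    · rw [hI, ← lintegral_mul_const _ (by fun_prop)]
      refine lintegral_mono_ae ?_
      have h0 : ∀ᵐ t : ℝ ∂(volume.restrict (Set.Icc (0 : ℝ) 1)), t ≠ 0 :=
        ae_restrict_of_ae (by simp [ae_iff])
      filter_upwards [ae_restrict_mem measurableSet_Icc, h0] with t ht ht0
      exact ball_avg_le _ hdc x t (lt_of_le_of_ne ht.1 (Ne.symm ht0))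
    · have : Continuous (Function.uncurry fun (y : E³) (t : ℝ) =>
          ‖fderiv ℝ u (x + t • y)‖ₑ) := by
        refine continuous_enorm.comp (hdc.comp ?_)
        fun_prop
      exact this.measurable.aemeasurable
  have h3 : V * ‖u x‖ₑ ≤ eLpNorm u 2 (volume : Measure E³) * V ^ (1/2 : ℝ) +
      I * (eLpNorm (fderiv ℝ u) 6 (volume : Measure E³) * V ^ (5/6 : ℝ)) := by
    calc V * ‖u x‖ₑ = ∫⁻ y in Metric.ball (0 : E³) 1, ‖u x‖ₑ := by
          rw [setLIntegral_const, mul_comm]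
      _ ≤ ∫⁻ y in Metric.ball (0 : E³) 1, (‖u (x + y)‖ₑ +
            ∫⁻ t in Set.Icc (0 : ℝ) 1, ‖fderiv ℝ u (x + t • y)‖ₑ) := by
          refine setLIntegral_mono' measurableSet_ball fun y hy => ptwise u hu x y ?_
          simpa using (Metric.mem_ball.1 hy).le
      _ = _ := by
          refine lintegral_add_left ?_ _
          have hcu : Continuous (fun y : E³ => u (x + y)) := hu.continuous.comp (by fun_prop)
          exact (continuous_enorm.comp hcu).measurable
      _ ≤ _ := add_le_add h1 h2
  set a := eLpNorm u 2 (volume : Measure E³)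
  set b := eLpNorm (iteratedFDeriv ℝ 2 u) 2 (volume : Measure E³)
  calc ‖u x‖ₑ = V⁻¹ * (V * ‖u x‖ₑ) := by
        rw [← mul_assoc, ENNReal.inv_mul_cancel hV0 hVt, one_mul]
    _ ≤ V⁻¹ * (a * V ^ (1/2 : ℝ) + I * ((S * b) * V ^ (5/6 : ℝ))) := by
        gcongr
        exact h3.trans (by gcongr)
    _ ≤ V⁻¹ * ((a + b) * V ^ (1/2 : ℝ) + I * ((S * (a + b)) * V ^ (5/6 : ℝ))) := by
        gcongr
        · exact le_self_add
        · exact le_add_self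
    _ = A * (a + b) := by rw [hA]; ring

lemma fderiv_cubic (u : E³ → ℂ) (x : E³) (hu : DifferentiableAt ℝ u x) :
    ‖fderiv ℝ (fun x : E³ => ((‖u x‖ ^ 2 : ℝ) : ℂ) * u x) x‖ ≤
      3 * ‖u x‖ ^ 2 * ‖fderiv ℝ u x‖ := by
  have h := (hu.hasFDerivAt.norm_sq).smul hu.hasFDerivAt
  have he : (fun x : E³ => ((‖u x‖ ^ 2 : ℝ) : ℂ) * u x) =
      (fun x => ‖u x‖ ^ 2) • u := by
    funext z
    simp [Complex.real_smul]
  rw [he, h.fderiv]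
  refine (norm_add_le _ _).trans ?_
  have h1 : ‖innerSL ℝ (u x) ∘SL fderiv ℝ u x‖ ≤ ‖u x‖ * ‖fderiv ℝ u x‖ := by
    refine (ContinuousLinearMap.opNorm_comp_le _ _).trans ?_
    rw [innerSL_apply_norm]
  have h2 : ‖2 • innerSL ℝ (u x) ∘SL fderiv ℝ u x‖ ≤ 2 * (‖u x‖ * ‖fderiv ℝ u x‖) := by
    rw [two_smul, two_mul]
    exact (norm_add_le _ _).trans (add_le_add h1 h1)
  rw [norm_smul, ContinuousLinearMap.norm_smulRight_apply, Real.norm_of_nonneg (by positivity)]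
  nlinarith [mul_le_mul_of_nonneg_right h2 (norm_nonneg (u x))]

/-- Weighted bound from a pointwise bound. -/
lemma weighted_aux {F G : Type*} [NormedAddCommGroup F] [NormedAddCommGroup G]
    (f : E³ → F) (g : E³ → G) (hf : Continuous f) (K : ℝ) (hK : 0 ≤ K)
    (h : ∀ x, ‖g x‖ ≤ K * ‖f x‖) :
    eLpNorm (fun x : E³ => (1 + ‖x‖) * ‖g x‖) 2 (volume : Measure E³) ≤
      ENNReal.ofReal K * (eLpNorm f 2 (volume : Measure E³) +
        eLpNorm (fun x : E³ => ‖x‖ * ‖f x‖) 2 (volume : Measure E³)) := by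
  have h1 : eLpNorm (fun x : E³ => (1 + ‖x‖) * ‖g x‖) 2 (volume : Measure E³) ≤
      eLpNorm (K • ((fun x : E³ => ‖f x‖) + (fun x : E³ => ‖x‖ * ‖f x‖))) 2
        (volume : Measure E³) := by
    refine eLpNorm_mono_real fun x => ?_
    rw [Real.norm_of_nonneg (by positivity)]
    simp only [Pi.smul_apply, Pi.add_apply, smul_eq_mul]
    have := mul_le_mul_of_nonneg_left (h x) (show 0 ≤ 1 + ‖x‖ by positivity)
    linarith
  refine h1.trans ?_
  rw [eLpNorm_const_smul, Real.enorm_of_nonneg hK]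
  gcongr
  refine (eLpNorm_add_le ?_ ?_ (by norm_num)).trans ?_
  · exact hf.norm.aestronglyMeasurable
  · exact (continuous_norm.mul hf.norm).aestronglyMeasurable
  · rw [eLpNorm_norm]

lemma weighted_finite {F : Type*} [NormedAddCommGroup F] (f : E³ → F) (hf : Continuous f)
    (hc : HasCompactSupport f) :
    eLpNorm (fun x : E³ => ‖x‖ * ‖f x‖) 2 (volume : Measure E³) ≠ ∞ :=
  ((continuous_norm.mul hf.norm).memLp_of_hasCompactSupport (hc.norm.mul_left)).eLpNorm_ne_top

/-- Weighted `H¹₁` estimate of the cubic nonlinearity `N = |u|²u`: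
`‖(1+|x|)N‖₂ + ‖(1+|x|)∇N‖₂ ≤ C (M³ + M² (‖|x|u‖₂ + ‖|x|∇u‖₂))`
where `M = ‖u‖₂ + ‖∇u‖₂ + ‖∇²u‖₂`. -/
theorem weighted_cubic_nonlinearity_estimate :
    ∃ C : ℝ, 0 < C ∧ ∀ u : E³ → ℂ, ContDiff ℝ 2 u → HasCompactSupport u →
      ∀ M : ℝ,
        M = (eLpNorm u 2 (volume : Measure E³)).toReal +
            (eLpNorm (fderiv ℝ u) 2 (volume : Measure E³)).toReal +
            (eLpNorm (iteratedFDeriv ℝ 2 u) 2 (volume : Measure E³)).toReal →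
      ∀ N : E³ → ℂ, N = (fun x : E³ => ((‖u x‖ ^ 2 : ℝ) : ℂ) * u x) →
      eLpNorm (fun x : E³ => (1 + ‖x‖) * ‖N x‖) 2 (volume : Measure E³) +
        eLpNorm (fun x : E³ => (1 + ‖x‖) * ‖fderiv ℝ N x‖) 2 (volume : Measure E³) ≤
        ENNReal.ofReal (C * (M ^ 3 + M ^ 2 *
          ((eLpNorm (fun x : E³ => ‖x‖ * ‖u x‖) 2 (volume : Measure E³)).toReal +
            (eLpNorm (fun x : E³ => ‖x‖ * ‖fderiv ℝ u x‖) 2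
              (volume : Measure E³)).toReal))) := by
  obtain ⟨A, hA⟩ := agmon
  refine ⟨3 * (A : ℝ) ^ 2 + 1, by positivity, fun u hu hc M hM N hN => ?_⟩
  have hdc : Continuous (fderiv ℝ u) := hu.continuous_fderiv (by norm_num)
  have ha : eLpNorm u 2 (volume : Measure E³) ≠ ∞ :=
    (hu.continuous.memLp_of_hasCompactSupport hc).eLpNorm_ne_top
  have hb : eLpNorm (fderiv ℝ u) 2 (volume : Measure E³) ≠ ∞ :=
    (hdc.memLp_of_hasCompactSupport (hc.fderiv ℝ)).eLpNorm_ne_top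
  have hd : eLpNorm (iteratedFDeriv ℝ 2 u) 2 (volume : Measure E³) ≠ ∞ :=
    ((hu.continuous_iteratedFDeriv (m := 2) (by norm_num)).memLp_of_hasCompactSupport
      (hc.iteratedFDeriv 2)).eLpNorm_ne_top
  have hw1 := weighted_finite u hu.continuous hc
  have hw2 := weighted_finite (fderiv ℝ u) hdc (hc.fderiv ℝ)
  have hsup : ∀ x, ‖u x‖ ≤ A * M := by
    intro x
    have h := ENNReal.toReal_mono
      (ENNReal.mul_ne_top ENNReal.coe_ne_top (ENNReal.add_ne_top.2 ⟨ha, hd⟩)) (hA u hu hc x)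
    rw [toReal_enorm, ENNReal.toReal_mul, ENNReal.toReal_add ha hd, ENNReal.coe_toReal] at h
    refine h.trans (mul_le_mul_of_nonneg_left ?_ A.coe_nonneg)
    rw [hM]
    linarith [ENNReal.toReal_nonneg (a := eLpNorm (fderiv ℝ u) 2 (volume : Measure E³))]
  have hM0 : 0 ≤ M := by rw [hM]; positivity
  have hsq : ∀ x, ‖u x‖ ^ 2 ≤ (A * M) ^ 2 := fun x =>
    pow_le_pow_left₀ (norm_nonneg _) (hsup x) 2
  have hK : 0 ≤ 3 * (A * M) ^ 2 := by positivity
  have e1 := weighted_aux u N hu.continuous (3 * (A * M) ^ 2) hK (fun x => by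
    rw [hN]
    simp only [norm_mul, Complex.norm_real]
    rw [Real.norm_of_nonneg (by positivity)]
    refine mul_le_mul_of_nonneg_right ?_ (norm_nonneg _)
    nlinarith [hsq x])
  have e2 := weighted_aux (fderiv ℝ u) (fderiv ℝ N) hdc (3 * (A * M) ^ 2) hK (fun x => by
    rw [hN]
    refine (fderiv_cubic u x ((hu.differentiable (by norm_num)) x)).trans ?_
    refine mul_le_mul_of_nonneg_right ?_ (norm_nonneg _)
    nlinarith [hsq x])
  refine (add_le_add e1 e2).trans ?_
  rw [← mul_add, ← ENNReal.ofReal_toReal (ENNReal.add_ne_top.2 ⟨ENNReal.add_ne_top.2 ⟨ha, hw1⟩,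
    ENNReal.add_ne_top.2 ⟨hb, hw2⟩⟩), ← ENNReal.ofReal_mul hK]
  refine ENNReal.ofReal_le_ofReal ?_
  rw [ENNReal.toReal_add (ENNReal.add_ne_top.2 ⟨ha, hw1⟩) (ENNReal.add_ne_top.2 ⟨hb, hw2⟩),
    ENNReal.toReal_add ha hw1, ENNReal.toReal_add hb hw2]
  have hW : 0 ≤ (eLpNorm (fun x : E³ => ‖x‖ * ‖u x‖) 2 (volume : Measure E³)).toReal +
      (eLpNorm (fun x : E³ => ‖x‖ * ‖fderiv ℝ u x‖) 2 (volume : Measure E³)).toReal := by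
    positivity
  have hd0 : 0 ≤ (eLpNorm (iteratedFDeriv ℝ 2 u) 2 (volume : Measure E³)).toReal := by positivity
  set w1 := (eLpNorm (fun x : E³ => ‖x‖ * ‖u x‖) 2 (volume : Measure E³)).toReal
  set w2 := (eLpNorm (fun x : E³ => ‖x‖ * ‖fderiv ℝ u x‖) 2 (volume : Measure E³)).toReal
  set a := (eLpNorm u 2 (volume : Measure E³)).toReal
  set b := (eLpNorm (fderiv ℝ u) 2 (volume : Measure E³)).toReal
  calc 3 * (A * M) ^ 2 * (a + w1 + (b + w2)) ≤ 3 * (A * M) ^ 2 * (M + (w1 + w2)) := by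
        refine mul_le_mul_of_nonneg_left ?_ hK
        linarith
    _ = 3 * (A : ℝ) ^ 2 * (M ^ 3 + M ^ 2 * (w1 + w2)) := by ring
    _ ≤ _ := by
        refine mul_le_mul_of_nonneg_right (by linarith) (by positivity)
end
end

section
/- There exists a constant C > 0 such that for all continuously differentiable, compactly supported functions v, w : ℝ³ → ℂ, one has ∫_{ℝ³} |2|v|²w + v²·conj(w) + |w|²w + |w|²v| dx ≤ C ( ‖v‖_{L^∞} ‖(1+|x|)v‖_{L²} ‖∇w‖_{L²} + ‖w‖_{L²}^{3/2} ‖∇w‖_{L²}^{3/2} + ‖v‖_{L³} ‖w‖_{L²} ‖∇w‖_{L²} ). -/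
open MeasureTheory
open scoped ENNReal NNReal

noncomputable section

local notation "E³" => EuclideanSpace ℝ (Fin 3)

lemma hardy_ibp {w : E³ → ℂ} (hw : ContDiff ℝ 1 w) (hc : HasCompactSupport w) (i : Fin 3) :
    Integrable (fun x : E³ => ‖w x‖ ^ 2 * ((1 + ‖x‖ ^ 2)⁻¹ - 2 * x i ^ 2 * ((1 + ‖x‖ ^ 2)⁻¹) ^ 2)
      + fderiv ℝ (fun x => ‖w x‖ ^ 2) x (EuclideanSpace.single i 1) * (x i * (1 + ‖x‖ ^ 2)⁻¹)) ∧
    ∫ x : E³, (‖w x‖ ^ 2 * ((1 + ‖x‖ ^ 2)⁻¹ - 2 * x i ^ 2 * ((1 + ‖x‖ ^ 2)⁻¹) ^ 2)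
      + fderiv ℝ (fun x => ‖w x‖ ^ 2) x (EuclideanSpace.single i 1) * (x i * (1 + ‖x‖ ^ 2)⁻¹)) = 0 := by
  have hpos : ∀ x : E³, (1 + ‖x‖ ^ 2) ≠ 0 := fun x => by positivity
  have hu : ContDiff ℝ 1 (fun x => ‖w x‖ ^ 2) := hw.norm_sq ℝ
  have huc : HasCompactSupport (fun x => ‖w x‖ ^ 2) := by
    refine hc.comp_left (g := fun z : ℂ => ‖z‖ ^ 2) (by simp)
  have hg : ∀ x : E³, HasFDerivAt (fun x : E³ => x i * (1 + ‖x‖ ^ 2)⁻¹)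
      (x i • (-((1 + ‖x‖ ^ 2) ^ 2)⁻¹ • (2 • innerSL ℝ x)) +
        (1 + ‖x‖ ^ 2)⁻¹ • (EuclideanSpace.proj i : E³ →L[ℝ] ℝ)) x := by
    intro x
    have h1 : HasFDerivAt (fun x : E³ => x i) (EuclideanSpace.proj i : E³ →L[ℝ] ℝ) x :=
      (EuclideanSpace.proj i : E³ →L[ℝ] ℝ).hasFDerivAt
    have h2 : HasFDerivAt (fun x : E³ => 1 + ‖x‖ ^ 2) (2 • innerSL ℝ x) x :=
      ((hasStrictFDerivAt_norm_sq x).hasFDerivAt).const_add 1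
    exact h1.mul ((hasDerivAt_inv (hpos x)).comp_hasFDerivAt x h2)
  have hgd : ∀ x : E³, fderiv ℝ (fun x : E³ => x i * (1 + ‖x‖ ^ 2)⁻¹) x (EuclideanSpace.single i 1)
      = (1 + ‖x‖ ^ 2)⁻¹ - 2 * x i ^ 2 * ((1 + ‖x‖ ^ 2)⁻¹) ^ 2 := by
    intro x
    rw [(hg x).fderiv]
    simp [EuclideanSpace.inner_single_right]
    ring
  have hcf : Continuous (fun x => fderiv ℝ (fun x => ‖w x‖ ^ 2) x (EuclideanSpace.single i 1)) :=
    (hu.continuous_fderiv one_ne_zero).clm_apply continuous_const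
  have hcs : HasCompactSupport (fun x => fderiv ℝ (fun x => ‖w x‖ ^ 2) x (EuclideanSpace.single i 1)) :=
    huc.fderiv_apply ℝ _
  have hi : Continuous (fun x : E³ => (1 + ‖x‖ ^ 2)⁻¹) :=
    Continuous.inv₀ (by fun_prop) hpos
  have hxi : Continuous (fun x : E³ => x i) := (EuclideanSpace.proj i : E³ →L[ℝ] ℝ).continuous
  have I1 : Integrable (fun x : E³ => fderiv ℝ (fun x => ‖w x‖ ^ 2) x (EuclideanSpace.single i 1) * (x i * (1 + ‖x‖ ^ 2)⁻¹)) :=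
    (hcf.mul (hxi.mul hi)).integrable_of_hasCompactSupport hcs.mul_right
  have I2 : Integrable (fun x : E³ => ‖w x‖ ^ 2 * ((1 + ‖x‖ ^ 2)⁻¹ - 2 * x i ^ 2 * ((1 + ‖x‖ ^ 2)⁻¹) ^ 2)) :=
    (hu.continuous.mul (by fun_prop)).integrable_of_hasCompactSupport huc.mul_right
  have I3 : Integrable (fun x : E³ => ‖w x‖ ^ 2 * (x i * (1 + ‖x‖ ^ 2)⁻¹)) :=
    (hu.continuous.mul (by fun_prop)).integrable_of_hasCompactSupport huc.mul_right
  refine ⟨I2.add I1, ?_⟩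
  have key := integral_mul_fderiv_eq_neg_fderiv_mul_of_integrable (μ := (volume : Measure E³))
    (f := fun x => ‖w x‖ ^ 2)
    (g := fun x : E³ => x i * (1 + ‖x‖ ^ 2)⁻¹) (v := EuclideanSpace.single i 1)
    I1 (by simpa only [hgd] using I2) I3
    (fun x _ => (hu.differentiable one_ne_zero) x) (fun x _ => (hg x).differentiableAt)
  simp only [hgd] at key
  rw [integral_add I2 I1, key]
  ring

lemma hardy {w : E³ → ℂ} (hw : ContDiff ℝ 1 w) (hc : HasCompactSupport w) :
    ∫ x : E³, ‖w x‖ ^ 2 * (1 + ‖x‖ ^ 2)⁻¹ ≤ 4 * ∫ x : E³, ‖fderiv ℝ w x‖ ^ 2 := by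
  have hu : ContDiff ℝ 1 (fun x => ‖w x‖ ^ 2) := hw.norm_sq ℝ
  have huc : HasCompactSupport (fun x => ‖w x‖ ^ 2) := by
    refine hc.comp_left (g := fun z : ℂ => ‖z‖ ^ 2) (by simp)
  have hi : Continuous (fun x : E³ => (1 + ‖x‖ ^ 2)⁻¹) :=
    Continuous.inv₀ (by fun_prop) (fun x => by positivity)
  have hD : Integrable (fun x : E³ => ‖fderiv ℝ w x‖ ^ 2) := by
    refine Continuous.integrable_of_hasCompactSupport
      ((hw.continuous_fderiv one_ne_zero).norm.pow 2) ?_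
    exact (hc.fderiv ℝ).comp_left (g := fun z => ‖z‖ ^ 2) (by simp)
  have hA : Integrable (fun x : E³ => ‖w x‖ ^ 2 * (1 + ‖x‖ ^ 2)⁻¹) :=
    (hu.continuous.mul hi).integrable_of_hasCompactSupport huc.mul_right
  have hz := fun i => (hardy_ibp hw hc i).2
  have hI := fun i => (hardy_ibp hw hc i).1
  have hsum := integral_finsetSum (μ := (volume : Measure E³)) Finset.univ (fun i _ => hI i)
  simp only [hz, Finset.sum_const_zero] at hsum
  have hSI := integrable_finsetSum (μ := (volume : Measure E³)) Finset.univ (fun i _ => hI i)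
  have hmono := integral_mono (μ := (volume : Measure E³)) (hA.const_mul (1/2))
    (hSI.add (hD.const_mul 2)) (fun x => ?_)
  · have h2 := integral_add hSI (hD.const_mul 2)
    simp only [Pi.add_apply] at hmono
    rw [h2, hsum, integral_const_mul, integral_const_mul] at hmono
    linarith
  · simp only [Pi.add_apply]
    set T := (1 + ‖x‖ ^ 2)⁻¹ with hT
    have hT1 : T * (1 + ‖x‖ ^ 2) = 1 := inv_mul_cancel₀ (by positivity)
    have hT0 : 0 < T := by positivity
    have hx : x = ∑ i, x i • EuclideanSpace.single i (1:ℝ) := by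
      ext j; simp [Fin.sum_univ_three]; fin_cases j <;> simp
    have hn : ‖x‖ ^ 2 = ∑ i, x i ^ 2 := EuclideanSpace.real_norm_sq_eq x
    have hd : ∑ i, fderiv ℝ (fun x => ‖w x‖ ^ 2) x (EuclideanSpace.single i 1) * (x i * T)
        = fderiv ℝ (fun x => ‖w x‖ ^ 2) x x * T := by
      conv_rhs => rw [hx]
      simp only [map_sum, map_smul, smul_eq_mul, Finset.sum_mul]
      rw [← hx]
      exact Finset.sum_congr rfl fun i _ => by ring
    have hfd : fderiv ℝ (fun x => ‖w x‖ ^ 2) x x = 2 * inner ℝ (w x) (fderiv ℝ w x x) := by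
      rw [((hw.differentiable one_ne_zero x).hasFDerivAt.norm_sq).fderiv]
      simp
      ring
    have hb : |inner ℝ (w x) (fderiv ℝ w x x)| ≤ ‖w x‖ * (‖fderiv ℝ w x‖ * ‖x‖) :=
      (abs_real_inner_le_norm _ _).trans (by gcongr; exact ContinuousLinearMap.le_opNorm _ _)
    rw [Finset.sum_add_distrib, hd, hfd, ← Finset.mul_sum, Finset.sum_sub_distrib,
      ← Finset.sum_mul, ← Finset.mul_sum, ← hn]
    simp only [Finset.sum_const, Finset.card_univ, Fintype.card_fin, nsmul_eq_mul]
    generalize ‖w x‖ = a at *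
    generalize ‖fderiv ℝ w x‖ = d at *
    generalize inner ℝ (w x) (fderiv ℝ w x x) = p at *
    generalize ‖x‖ = r at *
    have h1 := mul_le_mul_of_nonneg_right (abs_le.1 hb).1 hT0.le
    have e : r ^ 2 * T ^ 2 = T - T ^ 2 := by linear_combination T * hT1
    have h2 : a ^ 2 * (r ^ 2 * T ^ 2) ≤ a ^ 2 * T := by rw [e]; gcongr; nlinarith
    have h3 : 0 ≤ a ^ 2 * T ^ 2 := by positivity
    have e2 : a ^ 2 * (3 * T - 2 * r ^ 2 * T ^ 2) = a ^ 2 * T + 2 * (a ^ 2 * T ^ 2) := by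
      linear_combination (-2 * a ^ 2) * e
    push_cast
    rw [e2]
    nlinarith [sq_nonneg (a * (r * T) - 2 * d)]

lemma holder3 {f g h : E³ → ℝ} (hf : Continuous f) (hfc : HasCompactSupport f)
    (hg : Continuous g) (hgc : HasCompactSupport g) (hh : Continuous h) (hhc : HasCompactSupport h)
    (p q r s : ℝ≥0∞) [ENNReal.HolderTriple p s 1] [ENNReal.HolderTriple q r s] :
    ∫ x, ‖f x * (g x * h x)‖ ≤ (eLpNorm f p (volume : Measure E³)).toReal *
      (eLpNorm g q (volume : Measure E³)).toReal * (eLpNorm h r (volume : Measure E³)).toReal := by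
  have mf : MemLp f p := hf.memLp_of_hasCompactSupport hfc
  have mg : MemLp g q := hg.memLp_of_hasCompactSupport hgc
  have mh : MemLp h r := hh.memLp_of_hasCompactSupport hhc
  have h1 : eLpNorm (f • (g • h)) 1 (volume : Measure E³) ≤
      eLpNorm f p volume * (eLpNorm g q volume * eLpNorm h r volume) :=
    (eLpNorm_smul_le_mul_eLpNorm (p := p) (q := s) (mg.1.smul mh.1) mf.1).trans
      (by gcongr; exact eLpNorm_smul_le_mul_eLpNorm mh.1 mg.1)
  rw [integral_norm_eq_lintegral_enorm (by fun_prop), mul_assoc, ← ENNReal.toReal_mul,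
    ← ENNReal.toReal_mul]
  refine ENNReal.toReal_mono ?_ ?_
  · exact ENNReal.mul_ne_top mf.2.ne (ENNReal.mul_ne_top mg.2.ne mh.2.ne)
  · rw [eLpNorm_one_eq_lintegral_enorm] at h1
    exact h1

lemma l2sq {F : Type*} [NormedAddCommGroup F] {f : E³ → F} (hf : Continuous f)
    (hfc : HasCompactSupport f) :
    (eLpNorm f 2 (volume : Measure E³)).toReal ^ 2 = ∫ x, ‖f x‖ ^ 2 := by
  have mf : MemLp f 2 (volume : Measure E³) := hf.memLp_of_hasCompactSupport hfc
  rw [mf.eLpNorm_eq_integral_rpow_norm (by norm_num) (by norm_num)]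
  have h0 : 0 ≤ ∫ x : E³, ‖f x‖ ^ 2 := integral_nonneg fun x => by positivity
  simp only [ENNReal.toReal_ofNat, Real.rpow_ofNat]
  rw [ENNReal.toReal_ofReal (by positivity), ← Real.rpow_natCast, ← Real.rpow_mul h0]
  simp

lemma l3cube {f : E³ → ℝ} (hf : Continuous f) (hfc : HasCompactSupport f) :
    (eLpNorm f 3 (volume : Measure E³)).toReal ^ 3 = ∫ x, ‖f x‖ ^ 3 := by
  have mf : MemLp f 3 (volume : Measure E³) := hf.memLp_of_hasCompactSupport hfc
  rw [mf.eLpNorm_eq_integral_rpow_norm (by norm_num) (by norm_num)]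
  have h0 : 0 ≤ ∫ x : E³, ‖f x‖ ^ 3 := integral_nonneg fun x => by positivity
  simp only [ENNReal.toReal_ofNat, Real.rpow_ofNat]
  rw [ENNReal.toReal_ofReal (by positivity), ← Real.rpow_natCast, ← Real.rpow_mul h0]
  simp

instance holderTriple_three_six_two : ENNReal.HolderTriple (3 : ℝ≥0∞) 6 2 := ⟨by
  rw [← ENNReal.toReal_eq_toReal_iff' (by simp) (by simp), ENNReal.toReal_add (by simp) (by simp)]
  simp; norm_num⟩

/-- `L¹` estimate of the nonlinearity `2|v|²w + v²w̄ + |w|²w + |w|²v`: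
`∫ |2|v|²w + v²w̄ + |w|²w + |w|²v| ≤
  C (‖v‖_∞ ‖(1+|x|)v‖₂ ‖∇w‖₂ + ‖w‖₂^{3/2} ‖∇w‖₂^{3/2} + ‖v‖₃ ‖w‖₂ ‖∇w‖₂)`. -/
theorem nonlinearity_L1_estimate :
    ∃ C : ℝ, 0 < C ∧ ∀ v w : E³ → ℂ,
      ContDiff ℝ 1 v → HasCompactSupport v →
      ContDiff ℝ 1 w → HasCompactSupport w →
      ∫ x : E³, ‖2 * ((‖v x‖ ^ 2 : ℝ) : ℂ) * w x + (v x) ^ 2 * (starRingEnd ℂ) (w x) +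
          ((‖w x‖ ^ 2 : ℝ) : ℂ) * w x + ((‖w x‖ ^ 2 : ℝ) : ℂ) * v x‖ ≤
        C * ((eLpNorm v ⊤ (volume : Measure E³)).toReal *
              (eLpNorm (fun x : E³ => (1 + ‖x‖) * ‖v x‖) 2 (volume : Measure E³)).toReal *
              (eLpNorm (fderiv ℝ w) 2 (volume : Measure E³)).toReal +
            (eLpNorm w 2 (volume : Measure E³)).toReal ^ (3/2 : ℝ) *
              (eLpNorm (fderiv ℝ w) 2 (volume : Measure E³)).toReal ^ (3/2 : ℝ) +
            (eLpNorm v 3 (volume : Measure E³)).toReal *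
              (eLpNorm w 2 (volume : Measure E³)).toReal *
              (eLpNorm (fderiv ℝ w) 2 (volume : Measure E³)).toReal) := by
  set K : ℝ := (SNormLESNormFDerivOfEqConst ℂ (volume : Measure E³) 2 : ℝ) with hK
  have hK0 : 0 ≤ K := NNReal.coe_nonneg _
  refine ⟨6 + K ^ (3/2 : ℝ) + K, by positivity, fun v w hv hvc hw hwc => ?_⟩
  have cv := hv.continuous
  have cw := hw.continuous
  have cD := hw.continuous_fderiv one_ne_zero
  have cDc : HasCompactSupport (fderiv ℝ w) := hwc.fderiv ℝ
  have cV : Continuous (fun x => ‖v x‖) := cv.norm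
  have cW : Continuous (fun x => ‖w x‖) := cw.norm
  have sV : HasCompactSupport (fun x => ‖v x‖) := hvc.norm
  have sW : HasCompactSupport (fun x => ‖w x‖) := hwc.norm
  have ci : Continuous (fun x : E³ => (1 + ‖x‖)⁻¹) :=
    Continuous.inv₀ (by fun_prop) (fun x => by positivity)
  -- Sobolev
  have sob : (eLpNorm (fun x => ‖w x‖) 6 (volume : Measure E³)).toReal ≤
      K * (eLpNorm (fderiv ℝ w) 2 (volume : Measure E³)).toReal := by
    have h := eLpNorm_le_eLpNorm_fderiv_of_eq (F := ℂ) (volume : Measure E³) hw hwc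
      (p := 2) (p' := 6) (by norm_num) (by simp) (by simp; norm_num)
    have mD : MemLp (fderiv ℝ w) 2 (volume : Measure E³) := cD.memLp_of_hasCompactSupport cDc
    rw [eLpNorm_norm]
    have hfin := ENNReal.toReal_mono (ENNReal.mul_ne_top (by simp) mD.2.ne) h
    rw [ENNReal.toReal_mul] at hfin
    exact hfin
  -- Hardy
  have har : (eLpNorm (fun x : E³ => ‖w x‖ * (1 + ‖x‖)⁻¹) 2 (volume : Measure E³)).toReal ≤
      2 * (eLpNorm (fderiv ℝ w) 2 (volume : Measure E³)).toReal := by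
    refine le_of_sq_le_sq ?_ (by positivity)
    rw [mul_pow, l2sq cD cDc, l2sq (f := fun x : E³ => ‖w x‖ * (1 + ‖x‖)⁻¹) (cW.mul ci) sW.mul_right]
    refine le_trans ?_ ((hardy hw hwc).trans_eq (by norm_num))
    have ci2 : Continuous (fun x : E³ => (1 + ‖x‖ ^ 2)⁻¹) :=
      Continuous.inv₀ (by fun_prop) (fun x => by positivity)
    refine integral_mono ?_ ?_ fun x => ?_
    · refine Continuous.integrable_of_hasCompactSupport (by fun_prop) ?_
      exact (sW.mul_right (f' := fun x => (1 + ‖x‖)⁻¹)).comp_left (g := fun z : ℝ => ‖z‖ ^ 2) (by simp)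
    · refine Continuous.integrable_of_hasCompactSupport (by fun_prop) ?_
      exact (hwc.comp_left (g := fun z : ℂ => ‖z‖ ^ 2) (by simp)).mul_right
    · simp only [norm_mul, mul_pow, norm_inv, Real.norm_eq_abs, sq_abs, inv_pow]
      gcongr
      nlinarith [norm_nonneg x]
  -- three integrals
  have t1 := holder3 cV sV (g := fun x => (1 + ‖x‖) * ‖v x‖) (by fun_prop) sV.mul_left
    (h := fun x : E³ => ‖w x‖ * (1 + ‖x‖)⁻¹) (cW.mul ci) sW.mul_right ⊤ 2 2 1
  have t3 := holder3 cW sW cV sV cW sW 2 3 6 2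
  have t2 := holder3 cW sW cW sW cW sW 2 3 6 2
  have cube := l3cube cW sW
  have e1 : ∀ x, ‖‖v x‖ * ((1 + ‖x‖) * ‖v x‖ * (‖w x‖ * (1 + ‖x‖)⁻¹))‖ = ‖v x‖ ^ 2 * ‖w x‖ := by
    intro x
    rw [Real.norm_of_nonneg (by positivity)]
    have : 1 + ‖x‖ ≠ 0 := by positivity
    field_simp
  have e2 : ∀ x, ‖‖w x‖ * (‖w x‖ * ‖w x‖)‖ = ‖w x‖ ^ 3 := by
    intro x
    rw [Real.norm_of_nonneg (by positivity)]; ring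
  have e3 : ∀ x, ‖‖w x‖ * (‖v x‖ * ‖w x‖)‖ = ‖w x‖ ^ 2 * ‖v x‖ := by
    intro x
    rw [Real.norm_of_nonneg (by positivity)]; ring
  simp only [e1] at t1
  simp only [e2] at t2
  simp only [e3] at t3
  simp only [norm_norm] at cube
  rw [← cube] at t2
  simp only [eLpNorm_norm] at t1 t2 t3 sob cube
  have J1 : Integrable (fun x => ‖v x‖ ^ 2 * ‖w x‖) (volume : Measure E³) :=
    Continuous.integrable_of_hasCompactSupport (by fun_prop) sW.mul_left
  have J2 : Integrable (fun x => ‖w x‖ ^ 3) (volume : Measure E³) :=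
    Continuous.integrable_of_hasCompactSupport (by fun_prop)
      (hwc.comp_left (g := fun z : ℂ => ‖z‖ ^ 3) (by simp))
  have J3 : Integrable (fun x => ‖w x‖ ^ 2 * ‖v x‖) (volume : Measure E³) :=
    Continuous.integrable_of_hasCompactSupport (by fun_prop) sV.mul_left
  have main := integral_mono_of_nonneg (μ := (volume : Measure E³))
    (f := fun x : E³ => ‖2 * ((‖v x‖ ^ 2 : ℝ) : ℂ) * w x + (v x) ^ 2 * (starRingEnd ℂ) (w x) +
          ((‖w x‖ ^ 2 : ℝ) : ℂ) * w x + ((‖w x‖ ^ 2 : ℝ) : ℂ) * v x‖)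
    (g := fun x => (3 * (‖v x‖ ^ 2 * ‖w x‖) + ‖w x‖ ^ 3) + ‖w x‖ ^ 2 * ‖v x‖)
    (.of_forall fun x => norm_nonneg _) (((J1.const_mul 3).add J2).add J3)
    (.of_forall fun x => by
      refine (norm_add_le _ _).trans (add_le_add ((norm_add_le _ _).trans
        (add_le_add ((norm_add_le _ _).trans ?_) ?_)) ?_)
      · simp; linarith
      · simp; exact le_of_eq (by ring)
      · simp)
  refine main.trans ?_
  have J12 : Integrable (fun x => 3 * (‖v x‖ ^ 2 * ‖w x‖) + ‖w x‖ ^ 3) (volume : Measure E³) :=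
    (J1.const_mul 3).add J2
  rw [integral_add J12 J3, integral_add (J1.const_mul 3) J2,
    integral_const_mul, ← cube]
  clear main cube
  have n1 : 0 ≤ (eLpNorm v ⊤ (volume : Measure E³)).toReal := ENNReal.toReal_nonneg
  have n2 : 0 ≤ (eLpNorm (fun x : E³ => (1 + ‖x‖) * ‖v x‖) 2 (volume : Measure E³)).toReal :=
    ENNReal.toReal_nonneg
  have n3 : 0 ≤ (eLpNorm (fderiv ℝ w) 2 (volume : Measure E³)).toReal := ENNReal.toReal_nonneg
  have n4 : 0 ≤ (eLpNorm w 2 (volume : Measure E³)).toReal := ENNReal.toReal_nonneg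
  have n5 : 0 ≤ (eLpNorm v 3 (volume : Measure E³)).toReal := ENNReal.toReal_nonneg
  have n6 : 0 ≤ (eLpNorm w 3 (volume : Measure E³)).toReal := ENNReal.toReal_nonneg
  generalize (eLpNorm v ⊤ (volume : Measure E³)).toReal = a at *
  generalize (eLpNorm (fun x : E³ => (1 + ‖x‖) * ‖v x‖) 2 (volume : Measure E³)).toReal = b at *
  generalize (eLpNorm (fderiv ℝ w) 2 (volume : Measure E³)).toReal = d at *
  generalize (eLpNorm w 2 (volume : Measure E³)).toReal = m at *
  generalize (eLpNorm v 3 (volume : Measure E³)).toReal = l at *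
  generalize (eLpNorm w 3 (volume : Measure E³)).toReal = c at *
  have f1 := t1.trans (mul_le_mul_of_nonneg_left har (mul_nonneg n1 n2))
  have f3 := t3.trans (mul_le_mul_of_nonneg_left sob (mul_nonneg n4 n5))
  have f2' := t2.trans (mul_le_mul_of_nonneg_left sob (mul_nonneg n4 n6))
  have f2 : c ^ 3 ≤ K ^ (3/2 : ℝ) * (m ^ (3/2 : ℝ) * d ^ (3/2 : ℝ)) := by
    rw [← Real.mul_rpow n4 n3, ← Real.mul_rpow hK0 (by positivity)]
    have hc2 : c ^ 2 ≤ K * (m * d) := by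
      rcases n6.eq_or_lt with h | h
      · rw [← h]; simp; positivity
      · refine le_of_mul_le_mul_left ?_ h
        nlinarith
    calc c ^ 3 = (c ^ 2) ^ (3/2 : ℝ) := by
          rw [← Real.rpow_natCast c 2, ← Real.rpow_mul n6, ← Real.rpow_natCast]; norm_num
      _ ≤ _ := by gcongr
  have q1 : 0 ≤ a * b * d := by positivity
  have q2 : 0 ≤ m ^ (3/2 : ℝ) * d ^ (3/2 : ℝ) := by positivity
  have q3 : 0 ≤ l * m * d := by positivity
  have q4 : 0 ≤ K ^ (3/2 : ℝ) := by positivity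
  generalize m ^ (3/2 : ℝ) * d ^ (3/2 : ℝ) = Q at *
  generalize K ^ (3/2 : ℝ) = L at *
  have z1 := mul_nonneg q4 q1
  have z2 := mul_nonneg q4 q3
  have z3 := mul_nonneg hK0 q1
  have z4 := mul_nonneg hK0 q2
  nlinarith
end
end
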